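/- Let p > 3 be a prime. Then ∑_{k=1}^{(p-1)/2} H_k/k ≡ 2·q_p(2)^2 - 2p·q_p(2)^3 + (7/6)·p·B_{p-3} modulo p^2 (as rational numbers). -/

import Mathlib

/-- Two rationals `a` and `b` are congruent modulo `p^r`:
the `p`-adic valuation of `a - b` is at least `r`, i.e. `a - b = c * p^r`
with the denominator of `c` not divisible by `p`. -/
def ratCongr (p r : ℕ) (a b : ℚ) : Prop :=
  ∃ c : ℚ, a - b = c * (p : ℚ) ^ r ∧ ¬ (p ∣ c.den)

/-- The Fermat quotient `q_p(2) = (2^(p-1) - 1)/p` (an integer for odd primes),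
viewed as a rational number. -/
def fermatQ (p : ℕ) : ℚ := ((2 : ℚ) ^ (p - 1) - 1) / p

open Finset

/-- Pairing `j` with `2n + 1 - j`. -/
lemma prod_range_two_mul_eq_prod_mul_reflect {M : Type*} [CommMonoid M] (f : ℕ → M) (n : ℕ) :
    ∏ j ∈ range (2 * n), f (j + 1) =
      ∏ k ∈ range n, f (k + 1) * f (2 * n + 1 - (k + 1)) := by
  rw [two_mul, prod_range_add, prod_mul_distrib, ← prod_range_reflect (fun k => f (n + k + 1))]
  congr 1
  refine prod_congr rfl fun k hk => ?_
  rw [mem_range] at hk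
  congr 1
  omega

lemma sum_range_two_mul_eq_sum_add_reflect {M : Type*} [AddCommMonoid M] (f : ℕ → M) (n : ℕ) :
    ∑ j ∈ range (2 * n), f (j + 1) =
      ∑ k ∈ range n, (f (k + 1) + f (2 * n + 1 - (k + 1))) :=
  prod_range_two_mul_eq_prod_mul_reflect (M := Multiplicative M) f n

/-- Separating even and odd `j`, the odd ones being written as `2n + 1 - 2k`. -/
lemma prod_range_two_mul_eq_prod_even_mul_odd {M : Type*} [CommMonoid M] (f : ℕ → M) (n : ℕ) :
    ∏ j ∈ range (2 * n), f (j + 1) =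
      ∏ k ∈ range n, f (2 * (k + 1)) * f (2 * n + 1 - 2 * (k + 1)) := by
  have hsplit : ∏ j ∈ range (2 * n), f (j + 1) =
      ∏ k ∈ range n, f (2 * (k + 1)) * f (2 * k + 1) := by
    induction n with
    | zero => simp
    | succ n ih =>
      rw [prod_range_succ, ← ih, Nat.mul_succ, prod_range_succ, prod_range_succ, mul_assoc,
        mul_comm (f (2 * n + 1))]
  rw [hsplit, prod_mul_distrib, prod_mul_distrib, ← prod_range_reflect (fun k => f (2 * k + 1))]
  congr 1
  refine prod_congr rfl fun k hk => ?_
  rw [mem_range] at hk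
  congr 1
  omega

lemma sum_range_two_mul_eq_sum_even_add_odd {M : Type*} [AddCommMonoid M] (f : ℕ → M) (n : ℕ) :
    ∑ j ∈ range (2 * n), f (j + 1) =
      ∑ k ∈ range n, (f (2 * (k + 1)) + f (2 * n + 1 - 2 * (k + 1))) :=
  prod_range_two_mul_eq_prod_even_mul_odd (M := Multiplicative M) f n

/-- The first terms of the expansion of `∏ (1 - t xᵢ)` in powers of `t`. -/
lemma exists_two_mul_prod_one_sub_mul_eq {R : Type*} [CommRing R] {S : Subring R} {t : R}
    (ht : t ∈ S) {x : ℕ → R} {n : ℕ} (hx : ∀ k < n, x k ∈ S) :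
    ∃ c ∈ S, 2 * ∏ k ∈ range n, (1 - t * x k) =
      2 - 2 * t * ∑ k ∈ range n, x k
        + t ^ 2 * ((∑ k ∈ range n, x k) ^ 2 - ∑ k ∈ range n, x k ^ 2) + t ^ 3 * c := by
  induction n with
  | zero => exact ⟨0, zero_mem _, by simp⟩
  | succ n ih =>
    obtain ⟨c, hcS, hc⟩ := ih fun k hk => hx k (by omega)
    have hxn : x n ∈ S := hx n (by omega)
    have hsum : ∑ k ∈ range n, x k ∈ S :=
      sum_mem fun k hk => hx k (by have := mem_range.1 hk; omega)
    have hsq : ∑ k ∈ range n, x k ^ 2 ∈ S :=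
      sum_mem fun k hk => pow_mem (hx k (by have := mem_range.1 hk; omega)) 2
    refine ⟨c * (1 - t * x n)
      - x n * ((∑ k ∈ range n, x k) ^ 2 - ∑ k ∈ range n, x k ^ 2), ?_, ?_⟩
    · clear hx ih
      apply_rules [sub_mem, mul_mem, pow_mem, one_mem]
    · rw [prod_range_succ, sum_range_succ, sum_range_succ, ← mul_assoc, hc]
      ring

lemma sum_harmonic_div_eq (n : ℕ) :
    2 * ∑ k ∈ Icc 1 n, harmonic k / k =
      harmonic n ^ 2 + ∑ k ∈ range n, ((k + 1 : ℕ) : ℚ)⁻¹ ^ 2 := by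
  induction n with
  | zero => simp
  | succ n ih =>
    rw [sum_Icc_succ_top (by omega), mul_add, ih, sum_range_succ, harmonic_succ]
    have : ((n + 1 : ℕ) : ℚ) ≠ 0 := by positivity
    field_simp
    ring

section PIntegral

variable {p : ℕ} [Fact p.Prime]

/-- The ring of `p`-integral rational numbers. -/
noncomputable abbrev pIntegers (p : ℕ) [Fact p.Prime] : Subring ℚ :=
  (Rat.padicValuation p).integer

lemma mem_pIntegers {x : ℚ} : x ∈ pIntegers p ↔ ¬ p ∣ x.den := by
  rw [Valuation.mem_integer_iff, Rat.padicValuation_le_one_iff]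

lemma inv_natCast_mem_pIntegers {k : ℕ} (hk : ¬ p ∣ k) : (k : ℚ)⁻¹ ∈ pIntegers p := by
  rw [mem_pIntegers]
  by_cases h : k = 0
  · simp [h] at hk
  · simpa [h] using hk

lemma inv_natCast_mem_pIntegers_of_lt {k : ℕ} (h0 : 0 < k) (hk : k < p) :
    (k : ℚ)⁻¹ ∈ pIntegers p :=
  inv_natCast_mem_pIntegers (Nat.not_dvd_of_pos_of_lt h0 hk)

lemma bernoulli_mem_pIntegers {m : ℕ} (hm : m + 1 < p) : bernoulli m ∈ pIntegers p := by
  induction m using Nat.strong_induction_on with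
  | _ m ih =>
    have hsum := sum_bernoulli (m + 1)
    rw [sum_range_succ, Nat.choose_succ_self_right] at hsum
    have hm0 : ((m + 1 : ℕ) : ℚ) ≠ 0 := by positivity
    have hB : bernoulli m = ((m + 1 : ℕ) : ℚ)⁻¹ * ((if m + 1 = 1 then 1 else 0)
        - ∑ k ∈ range m, ((m + 1).choose k : ℚ) * bernoulli k) := by
      rw [← hsum]
      field_simp
      ring
    rw [hB]
    refine mul_mem (inv_natCast_mem_pIntegers_of_lt (by omega) hm) (sub_mem ?_ (sum_mem fun k hk =>
      mul_mem (natCast_mem _ _) (ih k (mem_range.1 hk) (by have := mem_range.1 hk; omega))))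
    split_ifs
    exacts [one_mem _, zero_mem _]

/-- If `f (p - j) ≡ f j + p g j` modulo `p²` and `f`, `g` scale under doubling of the argument,
then the sum of `f` over `1, …, p - 1` has two expressions through half-range sums. -/
lemma exists_sum_eq_of_reflection {n : ℕ} (hpn : p = 2 * n + 1) {f g : ℕ → ℚ} {a b : ℚ}
    (hrefl : ∀ j, 0 < j → j < p → ∃ c ∈ pIntegers p, f (p - j) = f j + p * g j + p ^ 2 * c)
    (hf : ∀ k, f (2 * k) = a * f k) (hg : ∀ k, g (2 * k) = b * g k) :
    ∃ c ∈ pIntegers p, ∃ d ∈ pIntegers p,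
      ∑ j ∈ range (2 * n), f (j + 1) = 2 * ∑ k ∈ range n, f (k + 1)
        + p * ∑ k ∈ range n, g (k + 1) + p ^ 2 * c ∧
      ∑ j ∈ range (2 * n), f (j + 1) = 2 * a * ∑ k ∈ range n, f (k + 1)
        + p * b * ∑ k ∈ range n, g (k + 1) + p ^ 2 * d := by
  choose! c hc hfc using hrefl
  refine ⟨∑ k ∈ range n, c (k + 1), sum_mem fun k hk => ?_,
    ∑ k ∈ range n, c (2 * (k + 1)), sum_mem fun k hk => ?_, ?_, ?_⟩
  · rw [mem_range] at hk
    exact hc _ (by omega) (by omega)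
  · rw [mem_range] at hk
    exact hc _ (by omega) (by omega)
  · rw [sum_range_two_mul_eq_sum_add_reflect, ← hpn]
    simp only [mul_sum, ← sum_add_distrib]
    refine sum_congr rfl fun k hk => ?_
    rw [mem_range] at hk
    rw [hfc _ (by omega) (by omega)]
    ring
  · rw [sum_range_two_mul_eq_sum_even_add_odd, ← hpn]
    simp only [mul_sum, ← sum_add_distrib]
    refine sum_congr rfl fun k hk => ?_
    rw [mem_range] at hk
    rw [hfc _ (by omega) (by omega), hf, hg]
    ring

lemma exists_natCast_pow_card_sub_one_eq {k : ℕ} (h0 : ¬ p ∣ k) : ∃ c ∈ pIntegers p,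
    (k : ℚ) ^ (p - 1) = 1 + p * c := by
  have hcop : IsCoprime (k : ℤ) p := by
    rw [Nat.isCoprime_iff_coprime]
    exact ((Nat.Prime.coprime_iff_not_dvd Fact.out).2 h0).symm
  obtain ⟨c, hc⟩ := (Int.ModEq.pow_card_sub_one_eq_one Fact.out hcop).symm.dvd
  refine ⟨c, intCast_mem _ _, ?_⟩
  have : (k : ℤ) ^ (p - 1) = 1 + p * c := by linarith
  exact_mod_cast this

/-- Faulhaber's formula modulo `p²`. -/
lemma exists_sum_range_pow_eq_mul_bernoulli {m : ℕ} (hm : m + 1 < p) : ∃ c ∈ pIntegers p,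
    ∑ k ∈ range p, (k : ℚ) ^ m = p * bernoulli m + p ^ 2 * c := by
  refine ⟨∑ i ∈ range m, bernoulli i * ((m + 1).choose i) * (p : ℚ) ^ (m - 1 - i)
    * ((m + 1 : ℕ) : ℚ)⁻¹, sum_mem fun i hi => ?_, ?_⟩
  · rw [mem_range] at hi
    exact mul_mem (mul_mem (mul_mem (bernoulli_mem_pIntegers (by omega)) (natCast_mem _ _))
      (pow_mem (natCast_mem _ _) _)) (inv_natCast_mem_pIntegers_of_lt (by omega) hm)
  · rw [sum_range_pow, sum_range_succ, Nat.choose_succ_self_right, mul_sum, add_comm]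
    congr 1
    · rw [Nat.add_sub_cancel_left]
      push_cast
      field_simp
    · refine sum_congr rfl fun i hi => ?_
      rw [mem_range] at hi
      rw [show m + 1 - i = 2 + (m - 1 - i) by omega, pow_add]
      push_cast
      ring

lemma exists_half_sum_inv_sq_eq {n : ℕ} (hpn : p = 2 * n + 1) (hp3 : 3 < p) :
    ∃ c ∈ pIntegers p, ∑ k ∈ range n, ((k + 1 : ℕ) : ℚ)⁻¹ ^ 2 =
      -(7 / 6) * p * ∑ k ∈ range n, ((k + 1 : ℕ) : ℚ)⁻¹ ^ 3 + p ^ 2 * c := by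
  have h3 : (3 : ℚ)⁻¹ ∈ pIntegers p := inv_natCast_mem_pIntegers_of_lt (by norm_num) hp3
  obtain ⟨c, hc, d, hd, h₁, h₂⟩ := exists_sum_eq_of_reflection hpn
    (f := fun j => (j : ℚ)⁻¹ ^ 2) (g := fun j => 2 * (j : ℚ)⁻¹ ^ 3) (a := 1 / 4) (b := 1 / 8)
    (fun j h0 hj => by
      refine ⟨(j : ℚ)⁻¹ ^ 3 * ((p - j : ℕ) : ℚ)⁻¹ ^ 2 * (3 * j - 2 * p), ?_, ?_⟩
      · have := inv_natCast_mem_pIntegers_of_lt h0 hj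
        have := inv_natCast_mem_pIntegers_of_lt (p := p) (k := p - j) (by omega) (by omega)
        exact mul_mem (mul_mem (pow_mem ‹_› 3) (pow_mem ‹_› 2)) (by aesop)
      · have hj0 : (j : ℚ) ≠ 0 := by positivity
        have hpj : (p : ℚ) - j ≠ 0 := sub_ne_zero.2 (by exact_mod_cast hj.ne')
        push_cast [Nat.cast_sub hj.le]
        field_simp
        ring)
    (fun k => by push_cast; rw [mul_inv]; ring) (fun k => by push_cast; rw [mul_inv]; ring)
  refine ⟨2 * 3⁻¹ * (d - c), by aesop, ?_⟩
  simp only [← mul_sum] at h₁ h₂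
  linear_combination (2 / 3) * (h₂ - h₁)

lemma exists_half_sum_inv_cube_eq {n : ℕ} (hpn : p = 2 * n + 1) (hp3 : 3 < p) :
    ∃ c ∈ pIntegers p, ∑ k ∈ range n, ((k + 1 : ℕ) : ℚ)⁻¹ ^ 3 =
      -2 * bernoulli (p - 3) + p * c := by
  have h3 : (3 : ℚ)⁻¹ ∈ pIntegers p := inv_natCast_mem_pIntegers_of_lt (by norm_num) hp3
  have hp0 : (p : ℚ) ≠ 0 := by positivity
  obtain ⟨m, hm⟩ : ∃ m, p = m + 4 := ⟨p - 4, by omega⟩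
  have hpm : p - 3 = m + 1 := by omega
  have hB : bernoulli (p - 3) ∈ pIntegers p := bernoulli_mem_pIntegers (by omega)
  have hH : ∑ k ∈ range n, ((k + 1 : ℕ) : ℚ)⁻¹ ^ 3 ∈ pIntegers p := sum_mem fun k hk =>
    pow_mem (inv_natCast_mem_pIntegers_of_lt (by omega) (by have := mem_range.1 hk; omega)) 3
  have hmp : (m : ℚ) + 1 = p - 3 := by rw [hm]; push_cast; ring
  have heven : Even (m + 1) := ⟨n - 1, by omega⟩
  obtain ⟨c, hc, d, hd, h₁, h₂⟩ := exists_sum_eq_of_reflection hpn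
    (f := fun j => (j : ℚ) ^ (m + 1)) (g := fun j => -((p - 3) * (j : ℚ) ^ m))
    (a := 2 ^ (m + 1)) (b := 2 ^ m)
    (fun j h0 hj => by
      obtain ⟨z, hz⟩ := Polynomial.powAddExpansion (-j : ℤ) p (m + 1)
      refine ⟨z, intCast_mem _ _, ?_⟩
      have hz' : (-j + p : ℚ) ^ (m + 1) =
          (-j) ^ (m + 1) + (m + 1 : ℕ) * (-j) ^ m * p + z * p ^ 2 := by
        exact_mod_cast hz
      have hodd : Odd m := by grind
      rw [heven.neg_pow, hodd.neg_pow] at hz'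
      push_cast [Nat.cast_sub hj.le] at hz' ⊢
      rw [← hmp]
      linear_combination hz')
    (fun k => by push_cast; ring) (fun k => by push_cast; ring)
  obtain ⟨e, he, hT⟩ := exists_sum_range_pow_eq_mul_bernoulli (p := p) (m := m + 1) (by omega)
  have hT' : ∑ j ∈ range (2 * n), ((j + 1 : ℕ) : ℚ) ^ (m + 1) =
      p * bernoulli (p - 3) + p ^ 2 * e := by
    rw [hpm, ← hT]
    conv_rhs => rw [hpn, sum_range_succ']
    simp
  obtain ⟨q, hq, h2q⟩ := exists_natCast_pow_card_sub_one_eq (p := p) (k := 2)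
    (Nat.not_dvd_of_pos_of_lt (by norm_num) (by omega))
  have h2m : 8 * (2 : ℚ) ^ m = 1 + p * q := by
    rw [← h2q, show p - 1 = m + 3 by omega]
    push_cast
    ring
  obtain ⟨s, hs, hS⟩ : ∃ s ∈ pIntegers p, ∑ k ∈ range n, ((k + 1 : ℕ) : ℚ) ^ m =
      ∑ k ∈ range n, ((k + 1 : ℕ) : ℚ)⁻¹ ^ 3 + p * s := by
    have hfermat : ∀ k, k < n → ∃ s ∈ pIntegers p,
        ((k + 1 : ℕ) : ℚ) ^ m = ((k + 1 : ℕ) : ℚ)⁻¹ ^ 3 + p * s := by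
      intro k hk
      obtain ⟨s, hs, hks⟩ := exists_natCast_pow_card_sub_one_eq (p := p) (k := k + 1)
        (Nat.not_dvd_of_pos_of_lt (by omega) (by omega))
      refine ⟨((k + 1 : ℕ) : ℚ)⁻¹ ^ 3 * s, mul_mem
        (pow_mem (inv_natCast_mem_pIntegers_of_lt (by omega) (by omega)) 3) hs, ?_⟩
      rw [show p - 1 = m + 3 by omega] at hks
      have : ((k + 1 : ℕ) : ℚ) ≠ 0 := by positivity
      field_simp
      rw [← hks]
      ring
    choose! s hs hks using hfermat
    refine ⟨∑ k ∈ range n, s k, sum_mem fun k hk => hs k (mem_range.1 hk), ?_⟩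
    rw [mul_sum, ← sum_add_distrib]
    exact sum_congr rfl fun k hk => hks k (mem_range.1 hk)
  simp only [sum_neg_distrib, ← mul_sum, hT', hS] at h₁ h₂
  generalize bernoulli (p - 3) = B at *
  generalize ∑ k ∈ range n, ((k + 1 : ℕ) : ℚ)⁻¹ ^ 3 = h at *
  generalize ∑ k ∈ range n, ((k + 1 : ℕ) : ℚ) ^ (m + 1) = F at *
  have hb : (2 : ℚ) ^ m = (1 + p * q) / 8 := by linarith
  rw [pow_succ (2 : ℚ) m, hb] at h₂
  refine ⟨3⁻¹ * (2 * q * B + (-6 + 2 * p * q) * e - 3 * s + (h + p * s)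
    + q * (p - 3) * (h + p * s) - 2 * (1 + p * q) * c + 8 * d), by aesop, ?_⟩
  refine mul_left_cancel₀ hp0 ?_
  linear_combination (8 / 3) * h₂ - (2 / 3) * (1 + p * q) * h₁

/-- Comparing the factorization of `(2n)!` along reflected pairs with the one along parity. -/
lemma two_pow_mul_prod_one_sub_eq (n : ℕ) :
    (2 : ℚ) ^ (2 * n) * ∏ k ∈ range n, (1 - (2 * n + 1 : ℕ) / 2 * ((k + 1 : ℕ) : ℚ)⁻¹) =
      ∏ k ∈ range n, (1 - (2 * n + 1 : ℕ) * ((k + 1 : ℕ) : ℚ)⁻¹) := by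
  have h := (prod_range_two_mul_eq_prod_mul_reflect (fun j => (j : ℚ)) n).symm.trans
    (prod_range_two_mul_eq_prod_even_mul_odd (fun j => (j : ℚ)) n)
  have hne : ∏ k ∈ range n, (-((k + 1 : ℕ) : ℚ) ^ 2) ≠ 0 :=
    prod_ne_zero_iff.2 fun k _ => neg_ne_zero.2 (by positivity)
  have hpow : (2 : ℚ) ^ (2 * n) = ∏ _k ∈ range n, (4 : ℚ) := by
    rw [prod_const, card_range, pow_mul]
    norm_num
  refine mul_left_cancel₀ hne ?_
  rw [hpow, ← prod_mul_distrib, ← prod_mul_distrib, ← prod_mul_distrib]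
  refine Eq.trans (Eq.trans ?_ h.symm) ?_ <;> refine prod_congr rfl fun k hk => ?_ <;>
    rw [mem_range] at hk
  · have : ((k + 1 : ℕ) : ℚ) ≠ 0 := by positivity
    rw [Nat.cast_sub (by omega)]
    push_cast at this ⊢
    field_simp
    ring
  · have : ((k + 1 : ℕ) : ℚ) ≠ 0 := by positivity
    rw [Nat.cast_sub (by omega)]
    push_cast at this ⊢
    field_simp
    ring

lemma fermatQ_mem_pIntegers (hp : p ≠ 2) : fermatQ p ∈ pIntegers p := by
  obtain ⟨q, hq, h⟩ := exists_natCast_pow_card_sub_one_eq (p := p) (k := 2)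
    (fun h => hp ((Nat.prime_dvd_prime_iff_eq Fact.out Nat.prime_two).1 h))
  have hp0 : (p : ℚ) ≠ 0 := Nat.cast_ne_zero.2 (Nat.Prime.ne_zero Fact.out)
  rw [fermatQ, ← Nat.cast_ofNat (R := ℚ), h, add_sub_cancel_left, mul_div_cancel_left₀ _ hp0]
  exact hq

lemma exists_harmonic_half_eq {n : ℕ} (hpn : p = 2 * n + 1) (hp3 : 3 < p) :
    ∃ c ∈ pIntegers p, harmonic n = -2 * fermatQ p + p * fermatQ p ^ 2 + p ^ 2 * c := by
  have h2 : (2 : ℚ)⁻¹ ∈ pIntegers p :=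
    inv_natCast_mem_pIntegers_of_lt (k := 2) two_pos (by omega)
  have h3 : (3 : ℚ)⁻¹ ∈ pIntegers p := inv_natCast_mem_pIntegers_of_lt (by norm_num) hp3
  have hp0 : (p : ℚ) ≠ 0 := by positivity
  have hinv : ∀ k < n, ((k + 1 : ℕ) : ℚ)⁻¹ ∈ pIntegers p := fun k hk =>
    inv_natCast_mem_pIntegers_of_lt (by omega) (by omega)
  have hq : fermatQ p ∈ pIntegers p := fermatQ_mem_pIntegers (by omega)
  have hH : harmonic n ∈ pIntegers p := sum_mem fun k hk => hinv k (mem_range.1 hk)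
  obtain ⟨e, he, hsq⟩ : ∃ e ∈ pIntegers p, ∑ k ∈ range n, ((k + 1 : ℕ) : ℚ)⁻¹ ^ 2 = p * e := by
    obtain ⟨c, hc, h⟩ := exists_half_sum_inv_sq_eq hpn hp3
    have hcube : ∑ k ∈ range n, ((k + 1 : ℕ) : ℚ)⁻¹ ^ 3 ∈ pIntegers p :=
      sum_mem fun k hk => pow_mem (hinv k (mem_range.1 hk)) 3
    refine ⟨-(7 * 2⁻¹ * 3⁻¹) * (∑ k ∈ range n, ((k + 1 : ℕ) : ℚ)⁻¹ ^ 3) + p * c,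
      add_mem (mul_mem (by aesop) hcube) (by aesop), ?_⟩
    rw [h]
    ring
  obtain ⟨c, hc, h₁⟩ := exists_two_mul_prod_one_sub_mul_eq (natCast_mem (pIntegers p) p) hinv
  obtain ⟨d, hd, h₂⟩ := exists_two_mul_prod_one_sub_mul_eq
    (mul_mem (natCast_mem (pIntegers p) p) h2) hinv
  have hprod := two_pow_mul_prod_one_sub_eq n
  have h2q : (2 : ℚ) ^ (2 * n) = 1 + p * fermatQ p := by
    rw [fermatQ, show p - 1 = 2 * n by omega]
    field_simp
    ring
  rw [← hpn, h2q] at hprod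
  simp only [← div_eq_mul_inv (p : ℚ) 2] at h₂
  change _ = 2 - 2 * (p : ℚ) * harmonic n + p ^ 2 * (harmonic n ^ 2 - _) + _ at h₁
  change _ = 2 - 2 * (p / 2 : ℚ) * harmonic n + (p / 2) ^ 2 * (harmonic n ^ 2 - _) + _ at h₂
  rw [hsq] at h₁ h₂
  generalize harmonic n = H at *
  generalize fermatQ p = q at *
  have hkey : 2 * (p * q) - p * H + 2⁻¹ ^ 2 * p ^ 2 * (H ^ 2 - p * e) + 2⁻¹ ^ 3 * p ^ 3 * d
      + p * q * (- p * H + 2⁻¹ ^ 2 * p ^ 2 * (H ^ 2 - p * e) + 2⁻¹ ^ 3 * p ^ 3 * d)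
      = -2 * p * H + p ^ 2 * (H ^ 2 - p * e) + p ^ 3 * c := by
    linear_combination 2 * hprod + h₁ - (1 + p * q) * h₂
  have hD : H ^ 2 - p * e ∈ pIntegers p := by aesop
  obtain ⟨r, hr, hHr⟩ : ∃ r ∈ pIntegers p, H = -2 * q + p * r := by
    refine ⟨(H ^ 2 - p * e) + p * c - (2⁻¹ ^ 2 * (H ^ 2 - p * e) + 2⁻¹ ^ 3 * p * d)
      - q * (- H + 2⁻¹ ^ 2 * p * (H ^ 2 - p * e) + 2⁻¹ ^ 3 * p ^ 2 * d), ?_, ?_⟩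
    · apply_rules [add_mem, sub_mem, neg_mem, mul_mem, pow_mem, natCast_mem, ofNat_mem]
    · refine mul_left_cancel₀ hp0 ?_
      linear_combination hkey
  refine ⟨3 * 2⁻¹ ^ 2 * r * (H - 2 * q) + q * r
    - 3 * 2⁻¹ ^ 2 * e + c - 2⁻¹ ^ 3 * d
      - q * (2⁻¹ ^ 2 * (H ^ 2 - p * e) + 2⁻¹ ^ 3 * p * d), ?_, ?_⟩
  · apply_rules [add_mem, sub_mem, neg_mem, mul_mem, pow_mem, natCast_mem, ofNat_mem]
  · refine mul_left_cancel₀ hp0 ?_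
    linear_combination hkey + p ^ 2 * (3 / 4 * (H - 2 * q) + q) * hHr

end PIntegral

theorem sum_Hk_div_k (p : ℕ) (hp : p.Prime) (hp3 : 3 < p) :
    ratCongr p 2
      (∑ k ∈ Finset.Icc 1 ((p - 1) / 2), harmonic k / k)
      (2 * fermatQ p ^ 2 - 2 * p * fermatQ p ^ 3 + (7 / 6) * p * bernoulli (p - 3)) := by
  have : Fact p.Prime := ⟨hp⟩
  obtain ⟨n, hpn⟩ : ∃ n, p = 2 * n + 1 := hp.odd_of_ne_two (by omega)
  have h2 : (2 : ℚ)⁻¹ ∈ pIntegers p :=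
    inv_natCast_mem_pIntegers_of_lt (k := 2) two_pos (by omega)
  have h3 : (3 : ℚ)⁻¹ ∈ pIntegers p := inv_natCast_mem_pIntegers_of_lt (by norm_num) hp3
  have hq : fermatQ p ∈ pIntegers p := fermatQ_mem_pIntegers (by omega)
  obtain ⟨a, ha, hharm⟩ := exists_harmonic_half_eq hpn hp3
  obtain ⟨b, hb, hsq⟩ := exists_half_sum_inv_sq_eq hpn hp3
  obtain ⟨c, hc, hcube⟩ := exists_half_sum_inv_cube_eq hpn hp3
  have hsum := sum_harmonic_div_eq n
  rw [hsq, hcube, hharm] at hsum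
  rw [show (p - 1) / 2 = n by omega]
  generalize fermatQ p = q at *
  refine ⟨2⁻¹ * (q ^ 4 + p ^ 2 * a ^ 2 - 4 * q * a + 2 * p * q ^ 2 * a
    - 7 * 2⁻¹ * 3⁻¹ * c + b), ?_, mem_pIntegers.1 ?_⟩
  · linear_combination hsum / 2
  · apply_rules [add_mem, sub_mem, neg_mem, mul_mem, pow_mem, natCast_mem, ofNat_mem]
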